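/- For all real numbers a ≥ 1 and γ > 0, one has 1 − Φ(a/(1+γ)) ≤ (1 − Φ(a))·exp(2a²γ), where Φ is the standard normal cumulative distribution function. -/

import Mathlib

noncomputable def gaussPDF (t : ℝ) : ℝ := (Real.sqrt (2 * Real.pi))⁻¹ * Real.exp (-t ^ 2 / 2)

noncomputable def Phi (t : ℝ) : ℝ := ∫ u in Set.Iic t, gaussPDF u

theorem gaussPDF_eq : gaussPDF = ProbabilityTheory.gaussianPDFReal 0 1 := by
  funext t
  simp [gaussPDF, ProbabilityTheory.gaussianPDFReal]

theorem gaussPDF_cont : Continuous gaussPDF := by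
  unfold gaussPDF; fun_prop

theorem gaussPDF_nonneg (t : ℝ) : 0 ≤ gaussPDF t := by
  unfold gaussPDF; positivity

theorem gaussPDF_int : MeasureTheory.Integrable gaussPDF := by
  rw [gaussPDF_eq]; exact ProbabilityTheory.integrable_gaussianPDFReal 0 1

theorem gaussPDF_total : ∫ u, gaussPDF u = 1 := by
  rw [gaussPDF_eq]; exact ProbabilityTheory.integral_gaussianPDFReal_eq_one 0 one_ne_zero

theorem gaussPDF_deriv (x : ℝ) : HasDerivAt gaussPDF (-x * gaussPDF x) x := by
  have h1 : HasDerivAt (fun t : ℝ => -t ^ 2 / 2) (-x) x := by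
    have := ((hasDerivAt_pow 2 x).neg).div_const 2
    refine HasDerivAt.congr_deriv this ?_
    push_cast; ring
  have h2 := (h1.exp).const_mul ((Real.sqrt (2 * Real.pi))⁻¹)
  refine HasDerivAt.congr_deriv h2 ?_
  unfold gaussPDF
  ring

theorem Phi_deriv (x : ℝ) : HasDerivAt Phi (gaussPDF x) x := by
  have h : Phi = fun t => Phi 0 + ∫ u in (0:ℝ)..t, gaussPDF u := by
    funext t
    have := intervalIntegral.integral_Iic_sub_Iic (μ := MeasureTheory.volume)
      (f := gaussPDF) (a := 0) (b := t) gaussPDF_int.integrableOn gaussPDF_int.integrableOn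
    unfold Phi
    linarith
  rw [h]
  exact (intervalIntegral.integral_hasDerivAt_right (gaussPDF_cont.intervalIntegrable _ _)
    (gaussPDF_cont.stronglyMeasurableAtFilter _ _) gaussPDF_cont.continuousAt).const_add _

theorem Phi_tendsto : Filter.Tendsto Phi Filter.atTop (nhds 1) := by
  rw [← gaussPDF_total]
  exact (MeasureTheory.aecover_Iic Filter.tendsto_id).integral_tendsto_of_countably_generated
    gaussPDF_int

theorem gaussPDF_le (t : ℝ) : gaussPDF t ≤ (Real.sqrt (2 * Real.pi))⁻¹ := by
  unfold gaussPDF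
  apply mul_le_of_le_one_right (by positivity)
  rw [Real.exp_le_one_iff]
  nlinarith [sq_nonneg t]

theorem mills (a : ℝ) (ha : 1 ≤ a) : gaussPDF a / (2 * a) ≤ 1 - Phi a := by
  have hd : ∀ x : ℝ, 1 ≤ x → HasDerivAt (fun x => 1 - Phi x - gaussPDF x / (2 * x))
      (gaussPDF x * (-1 / 2 + 1 / (2 * x ^ 2))) x := by
    intro x hx
    have hx0 : x ≠ 0 := by linarith
    have h2 : HasDerivAt (fun x : ℝ => 2 * x) 2 x := by
      simpa using (hasDerivAt_id x).const_mul 2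
    have := ((Phi_deriv x).const_sub 1).sub ((gaussPDF_deriv x).div h2 (by positivity))
    refine HasDerivAt.congr_deriv this ?_
    field_simp
    ring
  have hanti : AntitoneOn (fun x => 1 - Phi x - gaussPDF x / (2 * x)) (Set.Ici 1) := by
    apply antitoneOn_of_deriv_nonpos (convex_Ici 1)
    · intro x hx; exact (hd x hx).continuousAt.continuousWithinAt
    · intro x hx
      rw [interior_Ici] at hx
      exact (hd x (le_of_lt hx)).differentiableAt.differentiableWithinAt
    · intro x hx
      rw [interior_Ici] at hx
      have hx : 1 < x := hx
      rw [(hd x hx.le).deriv]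
      apply mul_nonpos_of_nonneg_of_nonpos (gaussPDF_nonneg x)
      have : 1 / (2 * x ^ 2) ≤ 1 / 2 := by
        apply one_div_le_one_div_of_le (by norm_num); nlinarith
      linarith
  have hlim : Filter.Tendsto (fun x => 1 - Phi x - gaussPDF x / (2 * x)) Filter.atTop
      (nhds 0) := by
    have h1 : Filter.Tendsto (fun x => gaussPDF x / (2 * x)) Filter.atTop (nhds 0) := by
      have h3 : Filter.Tendsto (fun x : ℝ => (Real.sqrt (2 * Real.pi))⁻¹ / (2 * x))
          Filter.atTop (nhds 0) :=
        Filter.Tendsto.div_atTop tendsto_const_nhds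
          (Filter.tendsto_id.const_mul_atTop (by norm_num))
      refine tendsto_of_tendsto_of_tendsto_of_le_of_le' tendsto_const_nhds h3 ?_ ?_
      · filter_upwards [Filter.eventually_ge_atTop 1] with x hx
        have := gaussPDF_nonneg x
        positivity
      · filter_upwards [Filter.eventually_ge_atTop 1] with x hx
        have := gaussPDF_le x
        gcongr
    simpa using (Phi_tendsto.const_sub 1).sub h1
  have : 0 ≤ 1 - Phi a - gaussPDF a / (2 * a) := by
    apply le_of_tendsto hlim
    filter_upwards [Filter.eventually_ge_atTop a] with x hx
    exact hanti (Set.mem_Ici.2 ha) (Set.mem_Ici.2 (ha.trans hx)) hx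
  linarith

theorem mills2 (a : ℝ) (ha : 1 ≤ a) (x : ℝ) (hx : x ≤ a) :
    gaussPDF x / (2 * a) ≤ 1 - Phi x := by
  have hd : ∀ x : ℝ, HasDerivAt (fun x => 1 - Phi x - gaussPDF x / (2 * a))
      (-gaussPDF x - -x * gaussPDF x / (2 * a)) x := fun x =>
    ((Phi_deriv x).const_sub 1).sub ((gaussPDF_deriv x).div_const _)
  have hanti : AntitoneOn (fun x => 1 - Phi x - gaussPDF x / (2 * a)) (Set.Iic a) := by
    apply antitoneOn_of_deriv_nonpos (convex_Iic a)
    · intro x hx; exact (hd x).continuousAt.continuousWithinAt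
    · intro x hx
      exact (hd x).differentiableAt.differentiableWithinAt
    · intro x hx
      rw [interior_Iic] at hx
      have hx : x < a := hx
      rw [(hd x).deriv]
      have h1 : x / (2 * a) ≤ 1 := by
        rw [div_le_one (by linarith)]; linarith
      have := mul_le_mul_of_nonneg_right h1 (gaussPDF_nonneg x)
      have e : -x * gaussPDF x / (2 * a) = -(x / (2 * a) * gaussPDF x) := by ring
      rw [e]; linarith
  have h := hanti (Set.mem_Iic.2 hx) (Set.mem_Iic.2 le_rfl) hx
  have := mills a ha
  simp only at h
  linarith

theorem stmt0 (a γ : ℝ) (ha : 1 ≤ a) (hγ : 0 < γ) :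
    1 - Phi (a / (1 + γ)) ≤ (1 - Phi a) * Real.exp (2 * a ^ 2 * γ) := by
  have hd : ∀ x : ℝ, HasDerivAt (fun x => (1 - Phi x) * Real.exp (2 * a * x))
      (-gaussPDF x * Real.exp (2 * a * x) +
        (1 - Phi x) * (Real.exp (2 * a * x) * (2 * a))) x := fun x => by
    have h2 : HasDerivAt (fun x : ℝ => 2 * a * x) (2 * a) x := by
      simpa using (hasDerivAt_id x).const_mul (2 * a)
    exact ((Phi_deriv x).const_sub 1).mul h2.exp
  have hmono : MonotoneOn (fun x => (1 - Phi x) * Real.exp (2 * a * x)) (Set.Iic a) := by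
    apply monotoneOn_of_deriv_nonneg (convex_Iic a)
    · intro x hx; exact (hd x).continuousAt.continuousWithinAt
    · intro x hx
      exact (hd x).differentiableAt.differentiableWithinAt
    · intro x hx
      rw [interior_Iic] at hx
      rw [(hd x).deriv]
      have h := mills2 a ha x (le_of_lt hx)
      rw [div_le_iff₀ (by linarith)] at h
      have := mul_nonneg (sub_nonneg.2 h) (Real.exp_pos (2 * a * x)).le
      linarith
  have hb : a / (1 + γ) ≤ a := div_le_self (by linarith) (by linarith)
  have h := hmono (Set.mem_Iic.2 hb) (Set.mem_Iic.2 le_rfl) hb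
  simp only at h
  have hQ : 0 ≤ 1 - Phi a := le_trans
    (div_nonneg (gaussPDF_nonneg a) (by linarith)) (mills a ha)
  have h3 : 2 * a * a ≤ 2 * a ^ 2 * γ + 2 * a * (a / (1 + γ)) := by
    have : a * (1 - γ) ≤ a / (1 + γ) := by
      rw [le_div_iff₀ (by linarith)]
      nlinarith [mul_nonneg (by linarith : 0 ≤ a) (sq_nonneg γ)]
    nlinarith
  have h4 : (1 - Phi a) * Real.exp (2 * a * a) ≤
      (1 - Phi a) * Real.exp (2 * a ^ 2 * γ) * Real.exp (2 * a * (a / (1 + γ))) := by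
    rw [mul_assoc (1 - Phi a), ← Real.exp_add]
    exact mul_le_mul_of_nonneg_left (Real.exp_le_exp.2 h3) hQ
  exact le_of_mul_le_mul_right (h.trans h4) (Real.exp_pos _)
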